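/- For a càdlàg function f : [a,b] → ℝ, c > 0, and the first downward-crossing time T_D := inf{ s ≥ a : sup_{t∈[a,s]} f(t) − f(s) ≥ c }, the upward truncated variation satisfies the splitting identity: UTV^c(f,[a,s]) = sup_{a ≤ t < u ≤ T_D ∧ s} max{f(u) − f(t) − c, 0} + UTV^c(f,[T_D ∧ s, s]). -/

import Mathlib

open Set Filter Classical

/-- A finite partition `t 0 < t 1 < ... < t n` of points in `[a, b]`. -/
def IsPart (a b : ℝ) (n : ℕ) (t : ℕ → ℝ) : Prop :=
  a ≤ t 0 ∧ t n ≤ b ∧ ∀ i < n, t i < t (i + 1)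

/-- Total variation of `f` on `[a, b]`. -/
noncomputable def TVar {E : Type*} [PseudoMetricSpace E] (f : ℝ → E) (a b : ℝ) : ENNReal :=
  ⨆ (n : ℕ) (t : ℕ → ℝ) (_ : IsPart a b n t),
    ∑ i ∈ Finset.range n, ENNReal.ofReal (dist (f (t (i + 1))) (f (t i)))

/-- Truncated variation of `f` at level `c` on `[a, b]`. -/
noncomputable def TVc {E : Type*} [PseudoMetricSpace E] (f : ℝ → E) (c a b : ℝ) : ENNReal :=
  ⨆ (n : ℕ) (t : ℕ → ℝ) (_ : IsPart a b n t),
    ∑ i ∈ Finset.range n, ENNReal.ofReal (dist (f (t (i + 1))) (f (t i)) - c)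

/-- Upward truncated variation. -/
noncomputable def UTVc (f : ℝ → ℝ) (c a b : ℝ) : ENNReal :=
  ⨆ (n : ℕ) (t : ℕ → ℝ) (_ : IsPart a b n t),
    ∑ i ∈ Finset.range n, ENNReal.ofReal (f (t (i + 1)) - f (t i) - c)

/-- Downward truncated variation. -/
noncomputable def DTVc (f : ℝ → ℝ) (c a b : ℝ) : ENNReal :=
  ⨆ (n : ℕ) (t : ℕ → ℝ) (_ : IsPart a b n t),
    ∑ i ∈ Finset.range n, ENNReal.ofReal (f (t i) - f (t (i + 1)) - c)

/-- `f` is càdlàg on `[a, b]`: right-continuous on `[a, b)`, with left limits on `(a, b]`. -/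
def Cadlag {E : Type*} [TopologicalSpace E] (f : ℝ → E) (a b : ℝ) : Prop :=
  (∀ t ∈ Set.Ico a b, Tendsto f (nhdsWithin t (Set.Ioi t)) (nhds (f t))) ∧
  (∀ t ∈ Set.Ioc a b, ∃ l, Tendsto f (nhdsWithin t (Set.Iio t)) (nhds l))

/-!
Write `A x` for the supremum of `(f q - f p - c)⁺` over `a ≤ p < q ≤ x`. Before
`T_D` the drawdown of `f` is at most `c`, so merging two consecutive rises never loses: the drop
between them costs less than the second `c` that is saved. Hence a whole partition of `[a, T_D]`
contributes at most `A T_D`. At `T_D` itself `f` lies at least `c` below its running maximum `M`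
(by right continuity), so an increment that jumps over `T_D` is at most the sum of an increment
ending at level `M` and one starting at `T_D`. Together these say that
`Φ x = A (min x T_D) + UTVc f c T_D x` grows at least as fast as the truncated increments of `f`;
since `UTVc f c a` is the least such function, it is at most `Φ`.
-/

open Topology Function

theorem iSup_add_le_of_le {ι : Sort*} {g : ι → ENNReal} {z w : ENNReal} (hz : z ≤ w)
    (hg : ∀ i, g i + z ≤ w) : (⨆ i, g i) + z ≤ w := by
  cases isEmpty_or_nonempty ι
  · simpa using hz
  · rw [ENNReal.iSup_add]
    exact iSup_le hg

section RunningSup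

theorem bddAbove_image_of_forall_isBoundedUnder {α β : Type*} [TopologicalSpace α]
    [SemilatticeSup β] [Nonempty β] {K : Set α} {f : α → β} (hK : IsCompact K)
    (hf : ∀ x ∈ K, (𝓝[K] x).IsBoundedUnder (· ≤ ·) f) : BddAbove (f '' K) := by
  refine hK.induction_on (p := fun s ↦ BddAbove (f '' s)) (by simp)
    (fun s t hst ht ↦ ht.mono (image_mono hst))
    (fun s t hs ht ↦ by simpa only [image_union] using hs.union ht) fun x hx ↦ ?_
  obtain ⟨C, hC⟩ := hf x hx
  exact ⟨{y | f y ≤ C}, hC, C, forall_mem_image.2 fun _ hy ↦ hy⟩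

theorem Cadlag.bddAbove_image {β : Type*} [TopologicalSpace β] [SemilatticeSup β]
    [BoundedLENhdsClass β] {f : ℝ → β} {a b : ℝ} (hf : Cadlag f a b) :
    BddAbove (f '' Icc a b) := by
  have : Nonempty β := ⟨f a⟩
  refine bddAbove_image_of_forall_isBoundedUnder isCompact_Icc fun x hx ↦ ?_
  have hleft : (𝓝[Ico a x] x).IsBoundedUnder (· ≤ ·) f := by
    rcases hx.1.eq_or_lt with rfl | hax
    · simp [IsBoundedUnder, isBounded_bot, this]
    · obtain ⟨l, hl⟩ := hf.2 x ⟨hax, hx.2⟩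
      exact hl.isBoundedUnder_le.mono (nhdsWithin_mono _ fun y hy ↦ hy.2)
  have hpoint : (𝓝[{x}] x).IsBoundedUnder (· ≤ ·) f := ⟨f x, by simp⟩
  have hright : (𝓝[Ioc x b] x).IsBoundedUnder (· ≤ ·) f := by
    rcases hx.2.eq_or_lt with rfl | hxb
    · simp [IsBoundedUnder, isBounded_bot, this]
    · exact (hf.1 x ⟨hx.1, hxb⟩).isBoundedUnder_le.mono (nhdsWithin_mono _ fun y hy ↦ hy.1)
  rw [← Ico_union_Icc_eq_Icc hx.1 hx.2, ← Ioc_insert_left hx.2, insert_eq, nhdsWithin_union,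
    nhdsWithin_union, IsBoundedUnder, Filter.map_sup, Filter.map_sup]
  exact isBounded_sup hleft (isBounded_sup hpoint hright)

variable {α β : Type*} [TopologicalSpace α] [LinearOrder α] [OrderTopology α]

theorem eventually_mapsTo_Icc {f : α → β} {a x : α} {s : Set β}
    (hx : MapsTo f (Icc a x) s) (hf : ∀ᶠ y in 𝓝[≥] x, f y ∈ s) :
    ∀ᶠ r in 𝓝[≥] x, MapsTo f (Icc a r) s := by
  have hIcc : Tendsto (fun r ↦ Icc x r) (𝓝[≥] x) (𝓝[≥] x).smallSets :=
    (tendsto_const_nhdsWithin self_mem_Ici).Icc tendsto_id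
  filter_upwards [hIcc.eventually hf.smallSets] with r hr y hy
  exact (le_total y x).elim (fun hyx ↦ hx ⟨hy.1, hyx⟩) fun hxy ↦ hr y ⟨hxy, hy.2⟩

theorem continuousWithinAt_sSup_image_Icc [TopologicalSpace β]
    [ConditionallyCompleteLinearOrder β] [OrderTopology β] [DenselyOrdered β]
    {f : α → β} {a x : α} (hax : a ≤ x) (hbdd : BddAbove (f '' Icc a x))
    (hf : ContinuousWithinAt f (Ici x) x) :
    ContinuousWithinAt (fun r ↦ sSup (f '' Icc a r)) (Ici x) x := by
  set M := sSup (f '' Icc a x)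
  have hle : ∀ y ∈ Icc a x, f y ≤ M := fun y hy ↦ le_csSup hbdd (mem_image_of_mem f hy)
  refine tendsto_order.2 ⟨fun l hl ↦ ?_, fun u hu ↦ ?_⟩
  · obtain ⟨C, hC⟩ := hf.isBoundedUnder_le
    have hmaps : ∀ᶠ r in 𝓝[≥] x, MapsTo f (Icc a r) (Iic (M ⊔ C)) :=
      eventually_mapsTo_Icc (fun y hy ↦ le_sup_of_le_left (hle y hy))
        ((eventually_map.1 hC).mono fun _ ↦ le_sup_of_le_right)
    filter_upwards [hmaps, self_mem_nhdsWithin] with r hr hxr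
    exact hl.trans_le <| csSup_le_csSup ⟨M ⊔ C, forall_mem_image.2 hr⟩
      ((nonempty_Icc.2 hax).image f) (image_mono (Icc_subset_Icc_right hxr))
  · obtain ⟨v, hMv, hvu⟩ := exists_between hu
    have hfv : ∀ᶠ y in 𝓝[≥] x, f y < v :=
      hf.eventually_lt_const ((hle x (right_mem_Icc.2 hax)).trans_lt hMv)
    have hmaps : ∀ᶠ r in 𝓝[≥] x, MapsTo f (Icc a r) (Iic v) :=
      eventually_mapsTo_Icc (fun y hy ↦ (hle y hy).trans hMv.le) (hfv.mono fun _ ↦ le_of_lt)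
    filter_upwards [hmaps, self_mem_nhdsWithin] with r hr hxr
    exact (csSup_le ((nonempty_Icc.2 (hax.trans hxr)).image f) (forall_mem_image.2 hr)).trans_lt hvu

end RunningSup

section Drawdown

variable {f : ℝ → ℝ} {a r x : ℝ}

/-- The drawdown `sup_{t ∈ [a, r]} f t - f r` of `f` at `r`. It has a junk value when `f` is not
bounded above on `[a, r]`. -/
noncomputable def drawdown (f : ℝ → ℝ) (a r : ℝ) : ℝ :=
  sSup (f '' Icc a r) - f r

theorem sub_le_drawdown (hbdd : BddAbove (f '' Icc a r)) (hx : x ∈ Icc a r) :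
    f x - f r ≤ drawdown f a r :=
  sub_le_sub_right (le_csSup hbdd (mem_image_of_mem f hx)) _

theorem continuousWithinAt_drawdown (har : a ≤ r) (hbdd : BddAbove (f '' Icc a r))
    (hf : ContinuousWithinAt f (Ici r) r) : ContinuousWithinAt (drawdown f a) (Ici r) r :=
  (continuousWithinAt_sSup_image_Icc har hbdd hf).sub hf

end Drawdown

theorem le_apply_csInf_of_continuousWithinAt {α β : Type*} [TopologicalSpace α]
    [ConditionallyCompleteLinearOrder α] [OrderTopology α] [TopologicalSpace β] [Preorder β]
    [ClosedIciTopology β] {g : α → β} {c : β} {S : Set α} (hne : S.Nonempty) (hbdd : BddBelow S)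
    (hg : ContinuousWithinAt g (Ici (sInf S)) (sInf S)) (hS : ∀ r ∈ S, c ≤ g r) :
    c ≤ g (sInf S) := by
  have : (𝓝[S] sInf S).NeBot := mem_closure_iff_nhdsWithin_neBot.1 (csInf_mem_closure hne hbdd)
  exact ge_of_tendsto (hg.mono fun r hr ↦ csInf_le hbdd hr) (eventually_mem_nhdsWithin.mono hS)

/-- `d` is `T_D ∧ s`, where `T_D` is the first time the drawdown of `f` from `a` reaches `c`. -/
structure IsStoppedDrawdownTime (f : ℝ → ℝ) (c a s d : ℝ) : Prop where
  left_le : a ≤ d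
  le_right : d ≤ s
  drawdown_lt : ∀ r ∈ Ico a d, drawdown f a r < c
  le_drawdown : d < s → c ≤ drawdown f a d

theorem isStoppedDrawdownTime_right {f : ℝ → ℝ} {c a s : ℝ} (has : a ≤ s)
    (hlt : ∀ r ∈ Ico a s, drawdown f a r < c) : IsStoppedDrawdownTime f c a s s where
  left_le := has
  le_right := le_rfl
  drawdown_lt := hlt
  le_drawdown h := absurd h (lt_irrefl s)

theorem isStoppedDrawdownTime_min_sInf {f : ℝ → ℝ} {c a b s : ℝ} (hs : s ∈ Icc a b)
    (hbdd : BddAbove (f '' Icc a b))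
    (hright : ∀ t ∈ Ico a b, ContinuousWithinAt f (Ici t) t)
    (hne : {r ∈ Icc a b | c ≤ drawdown f a r}.Nonempty) :
    IsStoppedDrawdownTime f c a s (min (sInf {r ∈ Icc a b | c ≤ drawdown f a r}) s) := by
  set S := {r ∈ Icc a b | c ≤ drawdown f a r}
  have left_le : a ≤ sInf S := le_csInf hne fun r hr ↦ hr.1.1
  have hSbdd : BddBelow S := ⟨a, fun r hr ↦ hr.1.1⟩
  refine ⟨le_min left_le hs.1, min_le_right _ _, fun r hr ↦ ?_, fun hlt ↦ ?_⟩
  · by_contra! hcr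
    have hrS : r ∈ S := ⟨⟨hr.1, hr.2.le.trans ((min_le_right _ _).trans hs.2)⟩, hcr⟩
    exact notMem_of_lt_csInf (hr.2.trans_le (min_le_left _ _)) hSbdd hrS
  · have hTs : sInf S < s := by simpa using hlt
    have hTb : sInf S < b := hTs.trans_le hs.2
    rw [min_eq_left hTs.le]
    exact le_apply_csInf_of_continuousWithinAt hne hSbdd
      (continuousWithinAt_drawdown left_le
        (hbdd.mono (image_mono (Icc_subset_Icc_right hTb.le))) (hright _ ⟨left_le, hTb⟩))
      fun r hr ↦ hr.2

section UpwardTruncatedVariation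

variable {f : ℝ → ℝ} {c a b d m p q s x y : ℝ} {n : ℕ} {t : ℕ → ℝ}

/-- The truncated upward increment `(f y - f x - c)⁺`. -/
noncomputable def upIncr (f : ℝ → ℝ) (c x y : ℝ) : ENNReal :=
  ENNReal.ofReal (f y - f x - c)

/-- The sum of the truncated upward increments along `t 0, ..., t n`, whose supremum over
partitions is `UTVc`. -/
noncomputable def upIncrSum (f : ℝ → ℝ) (c : ℝ) (n : ℕ) (t : ℕ → ℝ) : ENNReal :=
  ∑ i ∈ Finset.range n, upIncr f c (t i) (t (i + 1))

/-- The supremum of the truncated upward increments within `[a, d]`: the first summand of the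
splitting identity. -/
noncomputable def maxUpIncr (f : ℝ → ℝ) (c a d : ℝ) : ENNReal :=
  ⨆ (t : ℝ) (u : ℝ) (_ : a ≤ t) (_ : t < u) (_ : u ≤ d), upIncr f c t u

theorem IsPart.mem_Icc (ht : IsPart a b n t) {i : ℕ} (hi : i ≤ n) : t i ∈ Icc a b := by
  have hmono : MonotoneOn t (Iic n) :=
    monotoneOn_of_le_add_one ordConnected_Iic fun i _ _ hi ↦ (ht.2.2 i hi).le
  exact ⟨ht.1.trans (hmono (Nat.zero_le n) hi (Nat.zero_le i)),
    (hmono hi self_mem_Iic hi).trans ht.2.1⟩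

theorem IsPart.snoc (ht : IsPart a b n t) (hq : t n < q) :
    IsPart a q (n + 1) (update t (n + 1) q) := by
  refine ⟨by simpa using ht.1, by simp, fun i hi ↦ ?_⟩
  rw [update_of_ne hi.ne]
  rcases (Nat.lt_succ_iff_lt_or_eq.1 hi) with hin | rfl
  · rw [update_of_ne (by omega)]
    exact ht.2.2 i hin
  · simpa using hq

theorem upIncrSum_snoc (f : ℝ → ℝ) (c : ℝ) (n : ℕ) (t : ℕ → ℝ) (q : ℝ) :
    upIncrSum f c (n + 1) (update t (n + 1) q) = upIncrSum f c n t + upIncr f c (t n) q := by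
  rw [upIncrSum, Finset.sum_range_succ, update_self, update_of_ne (by omega)]
  congr 1
  refine Finset.sum_congr rfl fun i hi ↦ ?_
  have := Finset.mem_range.1 hi
  rw [update_of_ne (by omega), update_of_ne (by omega)]

theorem IsPart.upIncrSum_le_UTVc (ht : IsPart a b n t) : upIncrSum f c n t ≤ UTVc f c a b :=
  le_iSup_of_le n (le_iSup_of_le t (le_iSup_of_le ht le_rfl))

theorem IsPart.exists_upIncrSum_le (ht : IsPart a b n t) (f : ℝ → ℝ) (c : ℝ) :
    ∃ m u, IsPart a b m u ∧ u m = b ∧ upIncrSum f c n t ≤ upIncrSum f c m u := by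
  rcases ht.2.1.eq_or_lt with h | h
  · exact ⟨n, t, ht, h, le_rfl⟩
  · refine ⟨n + 1, update t (n + 1) b, ht.snoc h, update_self .., ?_⟩
    rw [upIncrSum_snoc]
    exact le_self_add

theorem UTVc_mono_right (f : ℝ → ℝ) (c a : ℝ) : Monotone (UTVc f c a) := fun _ _ h ↦
  iSup_mono fun _ ↦ iSup_mono fun _ ↦ iSup_mono' fun ht ↦ ⟨⟨ht.1, ht.2.1.trans h, ht.2.2⟩, le_rfl⟩

theorem UTVc_eq_zero_of_lt (h : b < a) : UTVc f c a b = 0 := by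
  simp only [UTVc, ENNReal.iSup_eq_zero]
  intro n t ht
  have h0 := ht.mem_Icc (Nat.zero_le n)
  exact absurd (h0.1.trans h0.2) h.not_ge

theorem upIncr_le_UTVc (hap : a ≤ p) (hpq : p < q) : upIncr f c p q ≤ UTVc f c a q := by
  have ht : IsPart a p 0 fun _ ↦ p := ⟨hap, le_rfl, by simp⟩
  refine le_trans ?_ (ht.snoc hpq).upIncrSum_le_UTVc
  rw [upIncrSum_snoc]
  exact le_add_self

theorem UTVc_add_upIncr_le (hap : a ≤ p) (hpq : p < q) :
    UTVc f c a p + upIncr f c p q ≤ UTVc f c a q := by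
  have hle : upIncr f c p q ≤ UTVc f c a q := upIncr_le_UTVc hap hpq
  refine iSup_add_le_of_le hle fun n ↦ iSup_add_le_of_le hle fun t ↦
    iSup_add_le_of_le hle fun ht ↦ ?_
  obtain ⟨m, u, hu, rfl, hle'⟩ := ht.exists_upIncrSum_le f c
  calc upIncrSum f c n t + upIncr f c (u m) q
      ≤ upIncrSum f c m u + upIncr f c (u m) q := by gcongr
    _ = upIncrSum f c (m + 1) (update u (m + 1) q) := (upIncrSum_snoc ..).symm
    _ ≤ UTVc f c a q := (hu.snoc hpq).upIncrSum_le_UTVc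

theorem add_UTVc_le_of_forall_add_upIncr_le {Φ : ℝ → ENNReal} (hab : a ≤ b)
    (hΦ : ∀ x y, a ≤ x → x < y → y ≤ b → Φ x + upIncr f c x y ≤ Φ y) :
    Φ a + UTVc f c a b ≤ Φ b := by
  have hmono : ∀ x y, a ≤ x → x ≤ y → y ≤ b → Φ x ≤ Φ y := fun x y hax hxy hyb ↦
    hxy.eq_or_lt.elim (fun h ↦ h ▸ le_rfl) fun h ↦ le_self_add.trans (hΦ x y hax h hyb)
  have hab' : Φ a ≤ Φ b := hmono a b le_rfl hab le_rfl
  rw [add_comm]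
  refine iSup_add_le_of_le hab' fun n ↦ iSup_add_le_of_le hab' fun t ↦
    iSup_add_le_of_le hab' fun ht ↦ ?_
  have hsum : ∀ k ≤ n, upIncrSum f c k t + Φ a ≤ Φ (t k) := by
    intro k hk
    induction k with
    | zero => simpa [upIncrSum] using hmono a (t 0) le_rfl ht.1 (ht.mem_Icc hk).2
    | succ k ih =>
      calc upIncrSum f c (k + 1) t + Φ a
          = upIncrSum f c k t + Φ a + upIncr f c (t k) (t (k + 1)) := by
            rw [upIncrSum, Finset.sum_range_succ, add_right_comm, upIncrSum]
        _ ≤ Φ (t k) + upIncr f c (t k) (t (k + 1)) := by gcongr; exact ih (by omega)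
        _ ≤ Φ (t (k + 1)) :=
            hΦ _ _ (ht.mem_Icc (by omega)).1 (ht.2.2 k hk) (ht.mem_Icc hk).2
  exact (hsum n le_rfl).trans (hmono _ _ (ht.mem_Icc le_rfl).1 ht.2.1 le_rfl)

theorem UTVc_add_UTVc_le (ham : a ≤ m) (hmb : m ≤ b) :
    UTVc f c a m + UTVc f c m b ≤ UTVc f c a b :=
  add_UTVc_le_of_forall_add_upIncr_le hmb fun _ _ hmx hxy _ ↦
    UTVc_add_upIncr_le (ham.trans hmx) hxy

theorem upIncr_le_maxUpIncr (hap : a ≤ p) (hpq : p < q) (hqd : q ≤ d) :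
    upIncr f c p q ≤ maxUpIncr f c a d :=
  le_iSup_of_le p <| le_iSup_of_le q <| le_iSup_of_le hap <| le_iSup_of_le hpq <|
    le_iSup_of_le hqd le_rfl

theorem maxUpIncr_le {w : ENNReal}
    (h : ∀ p q, a ≤ p → p < q → q ≤ d → upIncr f c p q ≤ w) : maxUpIncr f c a d ≤ w :=
  iSup_le fun p ↦ iSup_le fun q ↦ iSup_le fun hap ↦ iSup_le fun hpq ↦ iSup_le (h p q hap hpq)

theorem maxUpIncr_mono_right (f : ℝ → ℝ) (c a : ℝ) : Monotone (maxUpIncr f c a) := fun _ _ h ↦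
  maxUpIncr_le fun _ _ hap hpq hq ↦ upIncr_le_maxUpIncr hap hpq (hq.trans h)

theorem maxUpIncr_le_UTVc (f : ℝ → ℝ) (c a d : ℝ) : maxUpIncr f c a d ≤ UTVc f c a d :=
  maxUpIncr_le fun _ _ hap hpq hqd ↦ (upIncr_le_UTVc hap hpq).trans (UTVc_mono_right f c a hqd)

theorem upIncr_eq_zero (h : f y - f x ≤ c) : upIncr f c x y = 0 :=
  ENNReal.ofReal_of_nonpos (by linarith)

theorem upIncr_add_upIncr_le_of_sub_le (hqp : c ≤ f q - f p) (hyx : c ≤ f y - f x)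
    (hqx : f q - f x ≤ c) : upIncr f c p q + upIncr f c x y ≤ upIncr f c p y := by
  rw [upIncr, upIncr, ← ENNReal.ofReal_add (by linarith) (by linarith)]
  exact ENNReal.ofReal_le_ofReal (by linarith)

theorem maxUpIncr_add_upIncr_le (hax : a ≤ x) (hxy : x < y)
    (hdrop : ∀ q ∈ Icc a x, f q - f x ≤ c) :
    maxUpIncr f c a x + upIncr f c x y ≤ maxUpIncr f c a y := by
  rcases le_total (f y - f x) c with hyx | hyx
  · rw [upIncr_eq_zero hyx, add_zero]
    exact maxUpIncr_mono_right f c a hxy.le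
  have hle : upIncr f c x y ≤ maxUpIncr f c a y := upIncr_le_maxUpIncr hax hxy le_rfl
  refine iSup_add_le_of_le hle fun p ↦ iSup_add_le_of_le hle fun q ↦
    iSup_add_le_of_le hle fun hap ↦ iSup_add_le_of_le hle fun hpq ↦
    iSup_add_le_of_le hle fun hqx ↦ ?_
  rcases le_total (f q - f p) c with hqp | hqp
  · rwa [upIncr_eq_zero hqp, zero_add]
  · exact (upIncr_add_upIncr_le_of_sub_le hqp hyx (hdrop q ⟨hap.trans hpq.le, hqx⟩)).trans
      (upIncr_le_maxUpIncr hap (hpq.trans_le (hqx.trans hxy.le)) le_rfl)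

theorem maxUpIncr_add_ofReal_sSup_le (hx : x ∈ Icc a d) (hbdd : BddAbove (f '' Icc a d))
    (hdrop : ∀ q ∈ Icc a x, f q - f x ≤ c) :
    maxUpIncr f c a x + ENNReal.ofReal (sSup (f '' Icc a d) - f x - c) ≤ maxUpIncr f c a d := by
  set levels := {l : ℝ | maxUpIncr f c a x + ENNReal.ofReal (l - f x - c) ≤ maxUpIncr f c a d}
  have hclosed : IsClosed levels := isClosed_le
    (continuous_const.add (ENNReal.continuous_ofReal.comp (by fun_prop))) continuous_const
  have hsub : f '' Icc a d ⊆ levels := by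
    rintro _ ⟨v, hv, rfl⟩
    change maxUpIncr f c a x + upIncr f c x v ≤ maxUpIncr f c a d
    rcases le_or_gt v x with hvx | hxv
    · rw [upIncr_eq_zero (hdrop v ⟨hv.1, hvx⟩), add_zero]
      exact maxUpIncr_mono_right f c a hx.2
    · exact (maxUpIncr_add_upIncr_le hx.1 hxv hdrop).trans (maxUpIncr_mono_right f c a hv.2)
  exact closure_minimal hsub hclosed
    (csSup_mem_closure ((nonempty_Icc.2 (hx.1.trans hx.2)).image f) hbdd)

theorem maxUpIncr_add_upIncr_le_of_le_drawdown (hx : x ∈ Icc a d)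
    (hbdd : BddAbove (f '' Icc a d)) (hdrop : ∀ q ∈ Icc a x, f q - f x ≤ c)
    (hd : c ≤ drawdown f a d) :
    maxUpIncr f c a x + upIncr f c x y ≤ maxUpIncr f c a d + upIncr f c d y := by
  set M := sSup (f '' Icc a d)
  have hfd : f d + c ≤ M := by rw [drawdown] at hd; linarith
  have hsplit : upIncr f c x y ≤ ENNReal.ofReal (M - f x - c) + upIncr f c d y :=
    (ENNReal.ofReal_le_ofReal (by linarith)).trans ENNReal.ofReal_add_le
  calc maxUpIncr f c a x + upIncr f c x y
      ≤ maxUpIncr f c a x + ENNReal.ofReal (M - f x - c) + upIncr f c d y := by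
        rw [add_assoc]; gcongr
    _ ≤ maxUpIncr f c a d + upIncr f c d y := by
        gcongr; exact maxUpIncr_add_ofReal_sSup_le hx hbdd hdrop

theorem IsStoppedDrawdownTime.add_upIncr_le (hd : IsStoppedDrawdownTime f c a s d)
    (hbdd : BddAbove (f '' Icc a d)) (hax : a ≤ x) (hxy : x < y) (hys : y ≤ s) :
    maxUpIncr f c a (min x d) + UTVc f c d x + upIncr f c x y ≤
      maxUpIncr f c a (min y d) + UTVc f c d y := by
  rcases le_or_gt d x with hdx | hxd
  · rw [min_eq_right hdx, min_eq_right (hdx.trans hxy.le), add_assoc]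
    gcongr
    exact UTVc_add_upIncr_le hdx hxy
  have hdrop : ∀ q ∈ Icc a x, f q - f x ≤ c := fun q hq ↦
    (sub_le_drawdown (hbdd.mono (image_mono (Icc_subset_Icc_right hxd.le))) hq).trans
      (hd.drawdown_lt x ⟨hax, hxd⟩).le
  rw [min_eq_left hxd.le, UTVc_eq_zero_of_lt hxd, add_zero]
  rcases le_or_gt y d with hyd | hdy
  · rw [min_eq_left hyd]
    exact (maxUpIncr_add_upIncr_le hax hxy hdrop).trans le_self_add
  · rw [min_eq_right hdy.le]
    calc maxUpIncr f c a x + upIncr f c x y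
        ≤ maxUpIncr f c a d + upIncr f c d y :=
          maxUpIncr_add_upIncr_le_of_le_drawdown ⟨hax, hxd.le⟩ hbdd hdrop
            (hd.le_drawdown (hdy.trans_le hys))
      _ ≤ maxUpIncr f c a d + UTVc f c d y := by gcongr; exact upIncr_le_UTVc le_rfl hdy

theorem IsStoppedDrawdownTime.UTVc_eq (hd : IsStoppedDrawdownTime f c a s d)
    (hbdd : BddAbove (f '' Icc a d)) :
    UTVc f c a s = maxUpIncr f c a d + UTVc f c d s := by
  apply le_antisymm
  · have hle := add_UTVc_le_of_forall_add_upIncr_le (hd.left_le.trans hd.le_right)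
      (Φ := fun x ↦ maxUpIncr f c a (min x d) + UTVc f c d x)
      fun x y hax hxy hys ↦ hd.add_upIncr_le hbdd hax hxy hys
    rw [min_eq_right hd.le_right] at hle
    exact le_add_self.trans hle
  · calc maxUpIncr f c a d + UTVc f c d s
        ≤ UTVc f c a d + UTVc f c d s := by gcongr; exact maxUpIncr_le_UTVc f c a d
      _ ≤ UTVc f c a s := UTVc_add_UTVc_le hd.left_le hd.le_right

end UpwardTruncatedVariation

theorem utvc_splitting_general (a b : ℝ) (f : ℝ → ℝ) (hbdd : BddAbove (f '' Icc a b))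
    (hright : ∀ t ∈ Ico a b, ContinuousWithinAt f (Ioi t) t) (c s : ℝ) (hs : s ∈ Icc a b) (d : ℝ)
    (hd : d = if {r ∈ Icc a b | c ≤ sSup (f '' Icc a r) - f r}.Nonempty
      then min (sInf {r ∈ Icc a b | c ≤ sSup (f '' Icc a r) - f r}) s else s) :
    UTVc f c a s =
      (⨆ (t : ℝ) (u : ℝ) (_ : a ≤ t) (_ : t < u) (_ : u ≤ d),
        ENNReal.ofReal (f u - f t - c)) + UTVc f c d s := by
  have hT : IsStoppedDrawdownTime f c a s d := by
    split_ifs at hd with hne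
    · rw [hd]
      exact isStoppedDrawdownTime_min_sInf hs hbdd
        (fun t ht ↦ continuousWithinAt_Ioi_iff_Ici.1 (hright t ht)) hne
    · rw [hd]
      exact isStoppedDrawdownTime_right hs.1
        fun r hr ↦ not_le.1 fun hcr ↦ hne ⟨r, ⟨hr.1, hr.2.le.trans hs.2⟩, hcr⟩
  have hdb : d ≤ b := hT.le_right.trans hs.2
  exact hT.UTVc_eq (hbdd.mono (image_mono (Icc_subset_Icc_right hdb)))

/-- Splitting identity for the upward truncated variation at the first
downward-crossing time `T_D` (with `T_D ∧ s = s` when no downward crossing occurs). -/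
theorem utvc_splitting (a b : ℝ) (hab : a < b) (f : ℝ → ℝ)
    (hf : Cadlag f a b) (c : ℝ) (hc : 0 < c) (s : ℝ) (hs : s ∈ Set.Icc a b) :
    ∀ d : ℝ,
      (d = if h : {r ∈ Set.Icc a b | c ≤ sSup (f '' Set.Icc a r) - f r}.Nonempty
            then min (sInf {r ∈ Set.Icc a b | c ≤ sSup (f '' Set.Icc a r) - f r}) s
            else s) →
      UTVc f c a s =
        (⨆ (t : ℝ) (u : ℝ) (_ : a ≤ t) (_ : t < u) (_ : u ≤ d),
          ENNReal.ofReal (f u - f t - c)) + UTVc f c d s :=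
  utvc_splitting_general a b f hf.bddAbove_image hf.1 c s hs
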